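/- arXiv:2411.14791 — 2 statements merged into one kernel-verified Lean document; each statement's English description precedes it below -/
import Mathlib

section
/- Let P_n denote the path graph on n vertices and Z_{P_n}(λ) its independence polynomial. Then every complex zero of Z_{P_n} is a negative real number, and the zeros are unbounded over the family of all paths: for every M > 0 there exist n ∈ ℕ and λ ∈ ℝ with λ < 0, Z_{P_n}(λ) = 0, and |λ| > M. -/
open scoped Classical
open Finset Filter

noncomputable section

/-- A finite multigraph: a finite vertex type together with a multiset of
(unordered) edges. -/
structure MGraph where
  V : Type
  fin : Fintype V
  E : Multiset (Sym2 V)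

attribute [instance] MGraph.fin

namespace MGraph

/-- A `{0,1}`-vertex assignment is independent if no two vertices assigned `1`
form an edge. -/
def Indep (G : MGraph) (σ : G.V → Bool) : Prop :=
  ∀ v w : G.V, s(v, w) ∈ G.E → ¬(σ v = true ∧ σ w = true)

/-- The number of vertices assigned `1`. -/
def ones (G : MGraph) (σ : G.V → Bool) : ℕ :=
  (Finset.univ.filter fun v => σ v = true).card

/-- The degree of a vertex: the number of adjacent edges. -/
def degree (G : MGraph) (v : G.V) : ℕ :=
  (G.E.filter fun e => v ∈ e).card

/-- A singleton graph: one vertex, no edges. -/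
def IsSingleton (G : MGraph) : Prop :=
  (∀ v w : G.V, v = w) ∧ G.E = 0

/-- Connectivity of a multigraph. -/
def Connected (G : MGraph) : Prop :=
  ∀ v w : G.V, Relation.ReflTransGen (fun a b => s(a, b) ∈ G.E) v w

/-- The underlying simple graph of a multigraph. -/
def toSimple (G : MGraph) : SimpleGraph G.V where
  Adj v w := v ≠ w ∧ s(v, w) ∈ G.E
  symm := ⟨fun v w h => ⟨h.1.symm, by rw [Sym2.eq_swap]; exact h.2⟩⟩
  loopless := ⟨fun v h => h.1 rfl⟩

/-- A finite set of vertices is independent if no two of its members form an edge. -/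
def IndepFinset (G : MGraph) (I : Finset G.V) : Prop :=
  ∀ v ∈ I, ∀ w ∈ I, s(v, w) ∉ G.E

end MGraph

/-- The conditioned independence polynomial `Z_G(λ, x)` of a multigraph with
marked vertices, evaluated in any commutative ring at `lam`. -/
def Zcond {k : ℕ} (R : Type) [CommRing R] (lam : R) (G : MGraph)
    (marks : Fin k → G.V) (x : Fin k → Bool) : R :=
  ∑ σ : G.V → Bool,
    if G.Indep σ ∧ (∀ j, σ (marks j) = x j) then lam ^ G.ones σ else 0

/-- The (full) independence polynomial `Z_G(λ)`. -/
def Zfull (R : Type) [CommRing R] (lam : R) (G : MGraph) : R :=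
  ∑ σ : G.V → Bool, if G.Indep σ then lam ^ G.ones σ else 0

/-- A multigraph with `k` marked vertices labeled `1, …, k`. -/
structure MarkedGraph (k : ℕ) where
  G : MGraph
  mark : Fin k → G.V

/-- `Z_G(λ, x)` for a marked graph. -/
def MarkedGraph.Z {k : ℕ} (R : Type) [CommRing R] (lam : R)
    (A : MarkedGraph k) (x : Fin k → Bool) : R :=
  Zcond R lam A.G A.mark x

/-- The all-zeros tuple `(0, …, 0)`. -/
def zeroT (k : ℕ) : Fin k → Bool := fun _ => false

/-- The all-ones tuple `(1, …, 1)`. -/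
def oneT (k : ℕ) : Fin k → Bool := fun _ => true

/-- The `j`-th standard basis tuple `e_j`. -/
def unitT {k : ℕ} (j : Fin k) : Fin k → Bool := fun i => if i = j then true else false

/-- The number of `1`-entries of a binary tuple. -/
def wt {k : ℕ} (x : Fin k → Bool) : ℕ := (Finset.univ.filter fun j => x j = true).card

/-- A set of vertices agrees with a binary tuple `x` when it contains the marked
vertex labeled `j` iff `x j = 1`. -/
def Agrees {k : ℕ} (A : MarkedGraph k) (I : Finset A.G.V) (x : Fin k → Bool) : Prop :=
  ∀ j, A.mark j ∈ I ↔ x j = true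

/-- A marked graph is maximally independent if for each binary tuple `x` there is a
unique independent set of maximal cardinality agreeing with `x`, and moreover
`#I(1,…,1) = #I(0,…,0) + k`. -/
def MaxIndependent {k : ℕ} (A : MarkedGraph k) : Prop :=
  (∀ x : Fin k → Bool, ∃ I : Finset A.G.V,
    (A.G.IndepFinset I ∧ Agrees A I x) ∧
    (∀ J, A.G.IndepFinset J ∧ Agrees A J x → J.card ≤ I.card) ∧
    (∀ J, A.G.IndepFinset J ∧ Agrees A J x → J.card = I.card → J = I)) ∧
  (∀ I₁ I₀ : Finset A.G.V,
    ((A.G.IndepFinset I₁ ∧ Agrees A I₁ (oneT k)) ∧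
      ∀ J, A.G.IndepFinset J ∧ Agrees A J (oneT k) → J.card ≤ I₁.card) →
    ((A.G.IndepFinset I₀ ∧ Agrees A I₀ (zeroT k)) ∧
      ∀ J, A.G.IndepFinset J ∧ Agrees A J (zeroT k) → J.card ≤ I₀.card) →
    I₁.card = I₀.card + k)

/-- Gluing data `(H, Σ, Υ, Φ)` with parameters `m, k`:
a gluing scheme `H` (a labeled multi-hypergraph on `m` vertices, each vertex lying
in exactly one edge of each of the `k` labels), connecting graphs `Σ_e` with roots,
attaching maps `Υ_e`, and an injective labeling map `Φ`. -/
structure GluingData (m k : ℕ) where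
  /-- index type for the edge multi-set of the gluing scheme `H` -/
  EIdx : Type
  efin : Fintype EIdx
  /-- the vertex set of an edge of `H` -/
  edge : EIdx → Finset (Fin m)
  edge_nonempty : ∀ e, (edge e).Nonempty
  /-- the label of an edge -/
  label : EIdx → Fin k
  /-- for each label `j`, the edges labeled `j` partition the vertex set of `H` -/
  mem_unique : ∀ (j : Fin k) (i : Fin m), ∃! e : EIdx, label e = j ∧ i ∈ edge e
  /-- the connecting graphs `Σ_e` -/
  Sig : EIdx → MGraph
  Sig_nonempty : ∀ e, Nonempty (Sig e).V
  Sig_connected : ∀ e, (Sig e).Connected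
  /-- the root of `Σ_e` -/
  root : (e : EIdx) → (Sig e).V
  /-- the attaching maps `Υ_e` (only their values on members of `e` matter) -/
  att : (e : EIdx) → Fin m → (Sig e).V
  /-- the labeling map `Φ` -/
  Phi : Fin k → EIdx
  Phi_inj : Function.Injective Phi

attribute [instance] GluingData.efin

namespace GluingData

variable {m k : ℕ}

/-- Disjoint union of the `m` copies of `A` and of the connecting graphs. -/
def Carrier (D : GluingData m k) (A : MarkedGraph k) : Type :=
  (Fin m × A.G.V) ⊕ (Σ e : D.EIdx, (D.Sig e).V)

instance (D : GluingData m k) (A : MarkedGraph k) : Fintype (D.Carrier A) := by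
  unfold Carrier; infer_instance

/-- The gluing identifications: the marked vertex labeled `ℓ(e)` of the copy `i ∈ e`
is identified with `Υ_e(w_i)` in `Σ_e`. -/
def glueRel (D : GluingData m k) (A : MarkedGraph k) :
    D.Carrier A → D.Carrier A → Prop := fun a b =>
  ∃ (e : D.EIdx) (i : Fin m), i ∈ D.edge e ∧
    a = Sum.inl (i, A.mark (D.label e)) ∧ b = Sum.inr ⟨e, D.att e i⟩

/-- Vertices of `R(A)`. -/
def RV (D : GluingData m k) (A : MarkedGraph k) : Type := Quot (D.glueRel A)

instance (D : GluingData m k) (A : MarkedGraph k) : Fintype (D.RV A) :=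
  Fintype.ofSurjective (Quot.mk _) (fun b => Quot.inductionOn b fun a => ⟨a, rfl⟩)

/-- The graph recursion `R` determined by the gluing data. -/
def RGraph (D : GluingData m k) (A : MarkedGraph k) : MarkedGraph k where
  G := { V := D.RV A
         fin := inferInstance
         E := (∑ i : Fin m, A.G.E.map (Sym2.map fun v =>
                 (Quot.mk (D.glueRel A) (Sum.inl (i, v)) : D.RV A))) +
              ∑ e : D.EIdx, (D.Sig e).E.map (Sym2.map fun v =>
                 (Quot.mk (D.glueRel A) (Sum.inr ⟨e, v⟩) : D.RV A)) }
  mark := fun j =>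
    (Quot.mk (D.glueRel A) (Sum.inr ⟨D.Phi j, D.root (D.Phi j)⟩) : D.RV A)

/-- `‖Y|_e‖`: the number of copies `i ∈ e` whose marked vertex labeled `ℓ(e)` is
assigned `1` by `Y`. -/
def normY (D : GluingData m k) (e : D.EIdx) (Y : Fin m → Fin k → Bool) : ℕ :=
  ((D.edge e).filter fun i => Y i (D.label e) = true).card

/-- `Z_{Σ_e}(λ, Y|_e, x|_e)`: the conditioned independence polynomial of the
connecting graph `Σ_e`, given boundary conditions `Y` on the attached copies and
`x` at the root. -/
def ZE (D : GluingData m k) (R : Type) [CommRing R] (lam : R) (e : D.EIdx)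
    (Y : Fin m → Fin k → Bool) (x : Fin k → Bool) : R :=
  ∑ σ : (D.Sig e).V → Bool,
    if (D.Sig e).Indep σ ∧ (∀ i ∈ D.edge e, σ (D.att e i) = Y i (D.label e)) ∧
        (∀ j, D.Phi j = e → σ (D.root e) = x j)
      then lam ^ (D.Sig e).ones σ else 0

/-- `Z_{Σ_e}(λ, Y_e, x|_e)` where `Y_e` is an assignment to the vertices of the
single edge `e`. -/
def ZEdge (D : GluingData m k) (R : Type) [CommRing R] (lam : R) (e : D.EIdx)
    (Ye : {i // i ∈ D.edge e} → Bool) (x : Fin k → Bool) : R :=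
  ∑ σ : (D.Sig e).V → Bool,
    if (D.Sig e).Indep σ ∧ (∀ i : {i // i ∈ D.edge e}, σ (D.att e i.1) = Ye i) ∧
        (∀ j, D.Phi j = e → σ (D.root e) = x j)
      then lam ^ (D.Sig e).ones σ else 0

/-- `‖Y_e‖`: the number of `1`-entries of an assignment to the vertices of `e`. -/
def normYe (D : GluingData m k) (e : D.EIdx) (Ye : {i // i ∈ D.edge e} → Bool) : ℕ :=
  (Finset.univ.filter fun i => Ye i = true).card

/-- The label dynamics `Λ(j) = ℓ(Φ(j))`. -/
def Lam (D : GluingData m k) : Fin k → Fin k := fun j => D.label (D.Phi j)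

/-- A label is periodic if it is periodic for `Λ`. -/
def PeriodicLabel (D : GluingData m k) (j : Fin k) : Prop :=
  ∃ p, 1 ≤ p ∧ D.Lam^[p] j = j

/-- A label is critical if `#Φ(j) ≥ 2`. -/
def CriticalLabel (D : GluingData m k) (j : Fin k) : Prop :=
  2 ≤ (D.edge (D.Phi j)).card

/-- Non-degenerate: no periodic critical labels. -/
def NonDegenerate (D : GluingData m k) : Prop :=
  ∀ j, D.PeriodicLabel j → ¬D.CriticalLabel j

/-- Stable: non-degenerate and the connecting graph `Σ_{Φ(j)}` is a singleton for
every periodic label `j`. -/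
def Stable (D : GluingData m k) : Prop :=
  D.NonDegenerate ∧ ∀ j, D.PeriodicLabel j → (D.Sig (D.Phi j)).IsSingleton

/-- The edge `Φ_n(j)` of the gluing scheme `H_n` of the `n`-th iterate of the graph
recursion, as a set of copies indexed by words of length `n`:
`Φ_n(j) = Φ(j) × Φ_{n−1}(Λ(j))`. -/
def PhiSet (D : GluingData m k) (n : ℕ) (j : Fin k) : Finset (Fin n → Fin m) :=
  Finset.univ.filter fun w => ∀ t : Fin n, w t ∈ D.edge (D.Phi (D.Lam^[(t : ℕ)] j))

/-- Expanding: for some iterate `n ≥ 1` of the recursion, the edges `Φ_n(j)` are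
pairwise disjoint subsets of `V(H_n)`. -/
def Expanding (D : GluingData m k) : Prop :=
  ∃ n, 1 ≤ n ∧ ∀ j ℓ : Fin k, j ≠ ℓ → Disjoint (D.PhiSet n j) (D.PhiSet n ℓ)

end GluingData

/-- The singleton graph `K_1`. -/
def K1 : MGraph := { V := PUnit, fin := inferInstance, E := 0 }

lemma K1_connected : K1.Connected := by
  intro v w
  cases v; cases w
  exact Relation.ReflTransGen.refl

namespace GluingData

variable {m k : ℕ}

/-- The simplified gluing data: every connecting graph replaced by a singleton. -/
def simplified (D : GluingData m k) : GluingData m k :=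
  { D with
    Sig := fun _ => K1
    Sig_nonempty := fun _ => ⟨PUnit.unit⟩
    Sig_connected := fun _ => K1_connected
    root := fun _ => PUnit.unit
    att := fun _ _ => PUnit.unit }

/-- The homogeneous polynomial map `F : ℂ^{2^k} → ℂ^{2^k}` induced by the recursion
(for a fixed parameter `lam`). -/
def Fmap (D : GluingData m k) (lam : ℂ) (z : (Fin k → Bool) → ℂ) :
    (Fin k → Bool) → ℂ := fun x =>
  ∑ Y : Fin m → Fin k → Bool,
    (∏ i, z (Y i)) * ∏ e : D.EIdx, D.ZE ℂ lam e Y x / lam ^ D.normY e Y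

end GluingData

/-- Index type for the affine chart `{(0,…,0)-coordinate ≠ 0}` of `ℙ^{2^k−1}`. -/
abbrev NZ (k : ℕ) := {x : Fin k → Bool // x ≠ zeroT k}

/-- The affine chart `ℂ^{2^k−1}` of `ℙ^{2^k−1}`. -/
abbrev CS (k : ℕ) := NZ k → ℂ

/-- `e_j` as a chart index. -/
def unitNZ {k : ℕ} (j : Fin k) : NZ k :=
  ⟨unitT j, fun h => by
    have := congrFun h j
    simp [unitT, zeroT] at this⟩

/-- Extension of a chart point to a vector of homogeneous coordinates with
`(0,…,0)`-coordinate `1`. -/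
def extendC {k : ℕ} (u : CS k) : (Fin k → Bool) → ℂ :=
  fun x => if h : x = zeroT k then 1 else u ⟨x, h⟩

/-- The invariant manifold `M_e` in the chart: `[x] = ∏_{j : x_j = 1} [e_j]`. -/
def MeC (k : ℕ) : Set (CS k) :=
  {u | ∀ x : NZ k, u x = ∏ j ∈ Finset.univ.filter (fun j => x.1 j = true), u (unitNZ j)}

/-- The rational map `F̂` on `ℙ^{2^k−1}` induced by `F`, written in the chart. -/
def GluingData.Fc {m k : ℕ} (D : GluingData m k) (lam : ℂ) (u : CS k) : CS k := fun x =>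
  D.Fmap lam (extendC u) x.1 / D.Fmap lam (extendC u) (zeroT k)

/-- An independent set in a simple graph. -/
def SimpleGraph.IsIndepSet' {V : Type} (G : SimpleGraph V) (s : Set V) : Prop :=
  s.Pairwise fun a b => ¬G.Adj a b

/-- The independence polynomial of a finite simple graph. -/
def indepPoly {V : Type} [Fintype V] [DecidableEq V] (G : SimpleGraph V) : Polynomial ℂ :=
  ∑ I : Finset V, if G.IsIndepSet' (↑I : Set V) then Polynomial.X ^ I.card else 0

open Polynomial Polynomial.Chebyshev

/-!
Deleting the end vertex of a path gives `Z_{P_{n+2}} = Z_{P_{n+1}} + λ Z_{P_n}`, which becomes the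
recurrence of the Chebyshev polynomials of the second kind when `4 x² λ = -1`: in that case
`(2x)^(n+1) Z_{P_n}(λ) = U_{n+1}(x)`. So the zeros of `Z_{P_n}` are the numbers `-1 / (4x²)` with
`x` a nonzero root of `U_{n+1}`. The roots `cos (kπ / (n+2))` of `U_{n+1}` are all real, and for
odd `n` the smallest positive one is `sin (π / (2(n+2)))`, which tends to `0`.
-/

section IndependencePolynomial

variable {V W : Type} (R : Type*) [Semiring R]

/-- The independence polynomial of the subgraph of `G` induced on the finite set `s`, as a sum over
the independent sets of `G` contained in `s`. Keeping `G` fixed and varying `s` lets vertices be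
deleted without changing the vertex type, which may be infinite. -/
def indepPolyOn (G : SimpleGraph V) (s : Finset V) : R[X] :=
  ∑ I ∈ s.powerset with G.IsIndepSet' ((I : Finset V) : Set V), X ^ #I

lemma indepPoly_eq_indepPolyOn_univ [Fintype V] [DecidableEq V] (G : SimpleGraph V) :
    indepPoly G = indepPolyOn ℂ G univ := by
  rw [indepPoly, indepPolyOn, powerset_univ, sum_filter]

@[simp]
lemma indepPolyOn_empty (G : SimpleGraph V) : indepPolyOn R G ∅ = 1 := by
  have hempty : G.IsIndepSet' (∅ : Set V) := Set.pairwise_empty _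
  simp [indepPolyOn, filter_singleton, hempty]

lemma isIndepSet'_image_embedding_iff {G : SimpleGraph V} {H : SimpleGraph W} (f : G ↪g H)
    {s : Set V} : H.IsIndepSet' (f '' s) ↔ G.IsIndepSet' s := by
  rw [SimpleGraph.IsIndepSet', f.injective.injOn.pairwise_image]
  simp only [Set.Pairwise, Function.onFun, f.map_adj_iff, SimpleGraph.IsIndepSet']

lemma indepPolyOn_map {G : SimpleGraph V} {H : SimpleGraph W} (f : G ↪g H) (s : Finset V) :
    indepPolyOn R H (s.map f.toEmbedding) = indepPolyOn R G s := by
  simp only [indepPolyOn, sum_filter, map_eq_image, powerset_image]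
  rw [sum_image (image_injective f.toEmbedding.injective).injOn]
  refine sum_congr rfl fun I _ ↦ ?_
  rw [card_image_of_injective _ f.toEmbedding.injective, coe_image]
  exact if_congr (isIndepSet'_image_embedding_iff f) rfl rfl

lemma isIndepSet'_insert_iff {G : SimpleGraph V} {v : V} {s : Set V} :
    G.IsIndepSet' (insert v s) ↔ G.IsIndepSet' s ∧ ∀ w ∈ s, ¬G.Adj v w := by
  have : Std.Symm fun v w ↦ ¬G.Adj v w := ⟨fun _ _ h h' ↦ h h'.symm⟩
  rw [SimpleGraph.IsIndepSet', Set.pairwise_insert_of_symm]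
  exact and_congr_right fun _ ↦ forall₂_congr fun _ _ ↦ ⟨fun h hvw ↦ h hvw.ne hvw, fun h _ ↦ h⟩

lemma indepPolyOn_insert [DecidableEq V] (G : SimpleGraph V) {v : V} {s : Finset V} (hv : v ∉ s) :
    indepPolyOn R G (insert v s) =
      indepPolyOn R G s + X * indepPolyOn R G {w ∈ s | ¬G.Adj v w} := by
  have hindep : {I ∈ s.powerset | G.IsIndepSet' ((insert v I : Finset V) : Set V)} =
      {I ∈ powerset {w ∈ s | ¬G.Adj v w} | G.IsIndepSet' ((I : Finset V) : Set V)} := by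
    ext I
    simp only [mem_filter, mem_powerset, coe_insert, isIndepSet'_insert_iff, mem_coe,
      subset_iff]
    grind
  simp only [indepPolyOn]
  rw [sum_filter, sum_powerset_insert hv, ← sum_filter, ← sum_filter, hindep, mul_sum]
  congr 1
  refine sum_congr rfl fun I hI ↦ ?_
  have hvI : v ∉ I := fun h ↦ hv (mem_filter.1 (mem_powerset.1 (mem_filter.1 hI).1 h)).1
  rw [card_insert_of_notMem hvI, pow_succ']

@[simp]
lemma coeff_zero_indepPolyOn (G : SimpleGraph V) (s : Finset V) :
    (indepPolyOn R G s).coeff 0 = 1 := by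
  induction s using Finset.induction_on with
  | empty => simp
  | insert v s hv ih => simp [indepPolyOn_insert R G hv, ih]

end IndependencePolynomial

section Path

/-- The path `P_n` as an induced subgraph of the infinite path `hasse ℕ`. -/
def pathGraphEmbeddingHasseNat (n : ℕ) : SimpleGraph.pathGraph n ↪g SimpleGraph.hasse ℕ where
  toEmbedding := Fin.valEmbedding
  map_rel_iff' := by simp [SimpleGraph.pathGraph]

lemma indepPoly_pathGraph (n : ℕ) :
    indepPoly (SimpleGraph.pathGraph n) = indepPolyOn ℂ (SimpleGraph.hasse ℕ) (range n) := by
  have hrange : univ.map (pathGraphEmbeddingHasseNat n).toEmbedding = range n :=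
    Fin.map_valEmbedding_univ.trans (Nat.Iio_eq_range n)
  rw [indepPoly_eq_indepPolyOn_univ, ← indepPolyOn_map ℂ (pathGraphEmbeddingHasseNat n), hrange]

lemma indepPolyOn_hasse_range_add_two (R : Type*) [Semiring R] (n : ℕ) :
    indepPolyOn R (SimpleGraph.hasse ℕ) (range (n + 2)) =
      indepPolyOn R (SimpleGraph.hasse ℕ) (range (n + 1)) +
        X * indepPolyOn R (SimpleGraph.hasse ℕ) (range n) := by
  have hfilter : {w ∈ range (n + 1) | ¬(SimpleGraph.hasse ℕ).Adj (n + 1) w} = range n := by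
    ext w
    simp only [SimpleGraph.hasse_adj, Nat.covBy_iff_add_one_eq, mem_filter, mem_range]
    lia
  rw [range_add_one (n := n + 1), indepPolyOn_insert R _ notMem_range_self, hfilter]

lemma two_mul_pow_mul_eval_indepPolyOn_hasse_range {R : Type*} [CommRing R] {x lam : R}
    (h : 4 * x ^ 2 * lam = -1) (n : ℕ) :
    (2 * x) ^ (n + 1) * (indepPolyOn R (SimpleGraph.hasse ℕ) (range n)).eval lam =
      (U R ↑(n + 1)).eval x := by
  induction n using Nat.twoStepInduction with
  | zero => simp
  | one =>
    have hU : (U R 2).eval x = 4 * x ^ 2 - 1 := by simp [U_two]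
    have hZ : (indepPolyOn R (SimpleGraph.hasse ℕ) (range 1)).eval lam = 1 + lam := by
      rw [range_add_one, indepPolyOn_insert R _ notMem_range_self]
      simp
    rw [hZ, Nat.cast_two, hU]
    linear_combination h
  | more n ih₀ ih₁ =>
    have hU : (U R ↑(n + 2 + 1)).eval x =
        2 * x * (U R ↑(n + 1 + 1)).eval x - (U R ↑(n + 1)).eval x := by
      have := congrArg (eval x) (U_add_two R (n + 1))
      simpa [add_right_comm, add_assoc] using this
    rw [hU, ← ih₀, ← ih₁, indepPolyOn_hasse_range_add_two, eval_add, eval_mul, eval_X]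
    linear_combination
      (2 * x) ^ (n + 1) * (indepPolyOn R (SimpleGraph.hasse ℕ) (range n)).eval lam * h

end Path

section Chebyshev

lemma splits_U_real (n : ℕ) : (U ℝ n).Splits := by
  have hinj := (range n).nodup_map_iff_injOn.1 (roots_U_real_nodup n)
  rw [splits_iff_card_roots, roots_U_real, natDegree_U_natCast, card_val,
    card_image_of_injOn hinj, card_range]

lemma isRoot_U_complex_iff {n : ℕ} {z : ℂ} :
    (U ℂ n).IsRoot z ↔ ∃ x : ℝ, (U ℝ n).IsRoot x ∧ (x : ℂ) = z := by
  have hmap : (U ℝ n).map Complex.ofRealHom = U ℂ n := map_U _ _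
  have hne : U ℝ n ≠ 0 := U_ne_zero ℝ n (by lia)
  rw [← mem_roots (hmap ▸ map_ne_zero hne), ← hmap, (splits_U_real n).roots_map]
  simp [hne]

lemma isRoot_U_real_cos {n k : ℕ} (hk : k < n) :
    (U ℝ n).IsRoot (Real.cos ((k + 1) * Real.pi / (n + 1))) := by
  refine isRoot_of_mem_roots ?_
  rw [roots_U_real, mem_val]
  exact mem_image.2 ⟨k, mem_range.2 hk, rfl⟩

lemma isRoot_U_real_sin (m : ℕ) :
    (U ℝ ↑(2 * m + 2)).IsRoot (Real.sin (Real.pi / (2 * (2 * m + 3)))) := by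
  have hroot := isRoot_U_real_cos (n := 2 * m + 2) (k := m) (by lia)
  have hangle : (m + 1) * Real.pi / ((2 * m + 2 : ℕ) + 1) =
      Real.pi / 2 - Real.pi / (2 * (2 * m + 3)) := by
    push_cast
    field_simp
    ring
  rwa [hangle, Real.cos_pi_div_two_sub] at hroot

lemma exists_isRoot_U_real_mem_Ioo {ε : ℝ} (hε : 0 < ε) :
    ∃ n : ℕ, ∃ x ∈ Set.Ioo 0 ε, (U ℝ ↑(n + 1)).IsRoot x := by
  obtain ⟨m, hm⟩ := exists_nat_gt (Real.pi / ε)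
  rw [div_lt_iff₀ hε] at hm
  have hpi := Real.pi_pos
  set t : ℝ := Real.pi / (2 * (2 * m + 3)) with ht
  have ht_pos : 0 < t := by positivity
  have ht_lt : t < ε := by
    rw [ht, div_lt_iff₀ (by positivity)]
    nlinarith
  have ht_lt_pi : t < Real.pi := div_lt_self hpi (by linarith [m.cast_nonneg (α := ℝ)])
  exact ⟨2 * m + 1, Real.sin t,
    ⟨Real.sin_pos_of_pos_of_lt_pi ht_pos ht_lt_pi, (Real.sin_lt ht_pos).trans ht_lt⟩,
    isRoot_U_real_sin m⟩

end Chebyshev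

lemma eval_indepPoly_pathGraph_eq_zero_iff_isRoot_U {n : ℕ} {x lam : ℂ}
    (h : 4 * x ^ 2 * lam = -1) :
    (indepPoly (SimpleGraph.pathGraph n)).eval lam = 0 ↔ (U ℂ ↑(n + 1)).IsRoot x := by
  have hx : 2 * x ≠ 0 := by
    rw [mul_ne_zero_iff]
    refine ⟨two_ne_zero, ?_⟩
    rintro rfl
    simp at h
  rw [IsRoot, ← two_mul_pow_mul_eval_indepPolyOn_hasse_range h, ← indepPoly_pathGraph,
    mul_eq_zero_iff_left (pow_ne_zero _ hx)]

lemma eval_zero_indepPoly_pathGraph (n : ℕ) :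
    (indepPoly (SimpleGraph.pathGraph n)).eval 0 = 1 := by
  rw [← coeff_zero_eq_eval_zero, indepPoly_pathGraph, coeff_zero_indepPolyOn]

theorem eval_indepPoly_pathGraph_eq_zero_iff {n : ℕ} {lam : ℂ} :
    (indepPoly (SimpleGraph.pathGraph n)).eval lam = 0 ↔
      ∃ x : ℝ, x ≠ 0 ∧ (U ℝ ↑(n + 1)).IsRoot x ∧ lam = ((-(4 * x ^ 2)⁻¹ : ℝ) : ℂ) := by
  constructor
  · intro hzero
    have hlam : lam ≠ 0 := by
      rintro rfl
      simp [eval_zero_indepPoly_pathGraph] at hzero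
    obtain ⟨z, hz⟩ := IsAlgClosed.exists_pow_nat_eq (-(4 * lam)⁻¹) two_pos
    have hz' : 4 * z ^ 2 * lam = -1 := by rw [hz]; field_simp
    obtain ⟨x, hroot, rfl⟩ := isRoot_U_complex_iff.1
      ((eval_indepPoly_pathGraph_eq_zero_iff_isRoot_U hz').1 hzero)
    have hx : x ≠ 0 := by rintro rfl; simp at hz'
    refine ⟨x, hx, hroot, ?_⟩
    push_cast
    rw [hz]
    field_simp
  · rintro ⟨x, hx, hroot, rfl⟩
    have hx' : (x : ℂ) ≠ 0 := Complex.ofReal_ne_zero.2 hx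
    have h : 4 * (x : ℂ) ^ 2 * ((-(4 * x ^ 2)⁻¹ : ℝ) : ℂ) = -1 := by
      push_cast
      field_simp
    exact (eval_indepPoly_pathGraph_eq_zero_iff_isRoot_U h).2
      (isRoot_U_complex_iff.2 ⟨x, hroot, rfl⟩)

-- STATEMENT 15
theorem stmt15 :
    (∀ (n : ℕ) (lam : ℂ), (indepPoly (SimpleGraph.pathGraph n)).eval lam = 0 →
      ∃ r : ℝ, r < 0 ∧ lam = (r : ℂ)) ∧
    ∀ M : ℝ, 0 < M → ∃ (n : ℕ) (r : ℝ), r < 0 ∧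
      (indepPoly (SimpleGraph.pathGraph n)).eval ((r : ℝ) : ℂ) = 0 ∧ M < |r| := by
  refine ⟨fun n lam hzero ↦ ?_, fun M hM ↦ ?_⟩
  · obtain ⟨x, hx, -, hlam⟩ := eval_indepPoly_pathGraph_eq_zero_iff.1 hzero
    exact ⟨-(4 * x ^ 2)⁻¹, neg_lt_zero.2 (by positivity), hlam⟩
  · obtain ⟨n, x, ⟨hx_pos, hx_lt⟩, hroot⟩ :=
      exists_isRoot_U_real_mem_Ioo (ε := √(4 * M)⁻¹) (by positivity)
    have hpos : 0 < (4 * x ^ 2)⁻¹ := by positivity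
    refine ⟨n, -(4 * x ^ 2)⁻¹, neg_lt_zero.2 hpos,
      eval_indepPoly_pathGraph_eq_zero_iff.2 ⟨x, hx_pos.ne', hroot, rfl⟩, ?_⟩
    have hsq : x ^ 2 < (4 * M)⁻¹ := (Real.lt_sqrt hx_pos.le).1 hx_lt
    rw [abs_neg, abs_of_pos hpos, lt_inv_comm₀ hM (by positivity)]
    rw [mul_inv] at hsq
    linarith

end
end

section
/- Let (H, Σ, Υ, Φ) be a gluing data with parameters m, k ≥ 2 and (G_n)_{n≥0} a sequence with G_{n+1} = R(G_n); write (x)_n = Z_{G_n}(λ, x) for x ∈ {0,1}^k. Assume the point ((x)_n)_x lies on the invariant manifold, i.e., (x)_n/(0,…,0)_n = ∏_{j: x_j = 1} (e_j)_n/(0,…,0)_n for all x ∈ {0,1}^k. Then for every j ∈ {1,…,k}, writing e = Φ(j), ℓ = ℓ(e), and [y]_n = (y)_n/(0,…,0)_n, one has [e_j]_{n+1} = ( Σ_{Y_e} [e_ℓ]_n^{‖Y_e‖} · Z_{Σ_e}(λ, Y_e, e_j|_e)/λ^{‖Y_e‖} ) / ( Σ_{Y_e} [e_ℓ]_n^{‖Y_e‖}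 · Z_{Σ_e}(λ, Y_e, 0|_e)/λ^{‖Y_e‖} ), where Y_e ranges over all {0,1}-assignments to the vertices of the edge e, as an identity of rational functions in λ. In particular, the image under one recursion step of the invariant manifold lies in the submanifold that is a graph over the coordinates [e_ℓ] with ℓ in the image Λ({1,…,k}) of the label dynamics. -/
open scoped Classical
open Finset Filter

noncomputable section

/-! Every vertex of `R(A)` either lies on a connecting graph or is an unmarked vertex of a single
copy of `A`. Fixing the assignment on all connecting graphs therefore makes the `m` copies
independent of each other, and each contributes its polynomial `Z_A(λ, y)` stripped of the weight
of the marked vertices, namely `Z_A(λ, y) / λ^‖y‖`. On the invariant manifold this is `Z_A(λ, 0)`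
times a product over the labels `l` with `y_l = 1`; should `A` carry several labels on one vertex,
the manifold equations make both sides vanish as soon as `y` is `1` at one of these labels. Since
every pair (copy, label) belongs to exactly one edge of `H`, regrouping by edges turns
`Z_{R(A)}(λ, x)` into `Z_A(λ, 0)^m` times a product of sums over single edges. Passing from
`x = 0` to `x = e_j` only affects the factor of the edge `Φ(j)`, so all others cancel in the
quotient. -/

namespace MGraph

lemma ones_eq_zero_iff (G : MGraph) (σ : G.V → Bool) : G.ones σ = 0 ↔ σ = fun _ => false := by
  simp [ones, Finset.filter_eq_empty_iff, funext_iff]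

end MGraph

namespace MarkedGraph

variable {k : ℕ} {R S K : Type}

lemma map_Z [CommRing R] [CommRing S] (f : R →+* S) (lam : R) (A : MarkedGraph k)
    (x : Fin k → Bool) : f (A.Z R lam x) = A.Z S (f lam) x := by
  simp only [Z, Zcond, map_sum, apply_ite f, map_pow, map_zero]

lemma Z_zero_zeroT [CommRing R] (A : MarkedGraph k) : A.Z R 0 (zeroT k) = 1 := by
  unfold Z Zcond
  rw [Fintype.sum_eq_single (fun _ => false)]
  · rw [(A.G.ones_eq_zero_iff _).2 rfl, pow_zero, if_pos]
    exact ⟨fun _ _ _ h => Bool.false_ne_true h.1, fun _ => rfl⟩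
  · intro σ hσ
    rw [zero_pow (mt (A.G.ones_eq_zero_iff σ).1 hσ), ite_self]

lemma Z_ratFunc_X_zeroT_ne_zero [CommRing R] [IsDomain R] (A : MarkedGraph k) :
    A.Z (RatFunc R) RatFunc.X (zeroT k) ≠ 0 := by
  rw [← RatFunc.algebraMap_X, ← map_Z]
  refine (map_ne_zero_iff _ (RatFunc.algebraMap_injective R)).2 fun h => ?_
  have eval_zero := map_Z (Polynomial.evalRingHom (0 : R)) Polynomial.X A (zeroT k)
  rw [h, map_zero, Polynomial.coe_evalRingHom, Polynomial.eval_X, Z_zero_zeroT] at eval_zero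
  exact zero_ne_one eval_zero

/-- The number of unmarked vertices assigned `1`. -/
def interiorOnes (A : MarkedGraph k) (σ : A.G.V → Bool) : ℕ :=
  (Finset.univ.filter fun v => (∀ j, A.mark j ≠ v) ∧ σ v = true).card

/-- The conditioned independence polynomial in which marked vertices carry weight `1` instead
of `λ`, i.e. `Z_A(λ, x) / λ^‖x‖` when the marked vertices are distinct. -/
def interiorZ (R : Type) [CommRing R] (lam : R) (A : MarkedGraph k) (x : Fin k → Bool) : R :=
  ∑ σ : A.G.V → Bool,
    if A.G.Indep σ ∧ (∀ j, σ (A.mark j) = x j) then lam ^ A.interiorOnes σ else 0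

/-- No label with `x`-value `1` shares its marked vertex with another label. The definition of a
marked graph allows several labels on one vertex. -/
def Separates (A : MarkedGraph k) (x : Fin k → Bool) : Prop :=
  ∀ a b, x a = true → A.mark a = A.mark b → a = b

lemma ones_eq_card_image_mark_add (A : MarkedGraph k) {σ : A.G.V → Bool} {x : Fin k → Bool}
    (h : ∀ j, σ (A.mark j) = x j) :
    A.G.ones σ =
      ((Finset.univ.filter fun j => x j = true).image A.mark).card + A.interiorOnes σ := by
  unfold MGraph.ones interiorOnes
  rw [← Finset.card_filter_add_card_filter_not fun v => ∃ j, A.mark j = v, Finset.filter_filter,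
    Finset.filter_filter]
  congr 2
  · ext v
    simp only [Finset.mem_filter, Finset.mem_univ, true_and, Finset.mem_image]
    constructor
    · rintro ⟨hv, j, rfl⟩
      exact ⟨j, h j ▸ hv, rfl⟩
    · rintro ⟨j, hj, rfl⟩
      exact ⟨(h j).trans hj, j, rfl⟩
  · ext v
    simp only [Finset.mem_filter, Finset.mem_univ, true_and, not_exists, ne_eq, and_comm]

lemma Z_eq_pow_card_image_mark_mul_interiorZ [CommRing R] (lam : R) (A : MarkedGraph k)
    (x : Fin k → Bool) :
    A.Z R lam x =
      lam ^ ((Finset.univ.filter fun j => x j = true).image A.mark).card *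
        A.interiorZ R lam x := by
  unfold Z Zcond interiorZ
  rw [Finset.mul_sum]
  refine Finset.sum_congr rfl fun σ _ => ?_
  split_ifs with h
  · rw [A.ones_eq_card_image_mark_add h.2, pow_add]
  · rw [mul_zero]

lemma Separates.Z_eq [CommRing R] (lam : R) {A : MarkedGraph k} {x : Fin k → Bool}
    (h : A.Separates x) : A.Z R lam x = lam ^ wt x * A.interiorZ R lam x := by
  have mark_injOn : Set.InjOn A.mark (Finset.univ.filter fun j => x j = true) :=
    fun a ha b _ hab => h a b (Finset.mem_filter.1 ha).2 hab
  rw [Z_eq_pow_card_image_mark_mul_interiorZ, Finset.card_image_of_injOn mark_injOn, wt]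

lemma Z_unitT_eq_zero [CommRing R] (lam : R) (A : MarkedGraph k) {a b : Fin k} (hne : a ≠ b)
    (hmark : A.mark a = A.mark b) : A.Z R lam (unitT a) = 0 := by
  refine Finset.sum_eq_zero fun σ _ => if_neg fun ⟨_, h⟩ => ?_
  have values_eq : unitT a a = unitT a b := by rw [← h a, ← h b, hmark]
  simp [unitT, hne.symm] at values_eq

/-- The coordinate `[x] = (x) / (0, …, 0)` of a marked graph in the affine chart. -/
def coord [Field K] (lam : K) (A : MarkedGraph k) (x : Fin k → Bool) : K :=
  A.Z K lam x / A.Z K lam (zeroT k)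

lemma prod_coord_unitT_eq_zero [Field K] {lam : K} {A : MarkedGraph k} {x : Fin k → Bool}
    (hx : ¬A.Separates x) :
    ∏ j ∈ Finset.univ.filter (fun j => x j = true), A.coord lam (unitT j) = 0 := by
  simp only [Separates, not_forall] at hx
  obtain ⟨a, b, ha, hmark, hne⟩ := hx
  refine Finset.prod_eq_zero (Finset.mem_filter.2 ⟨Finset.mem_univ a, ha⟩) ?_
  rw [coord, Z_unitT_eq_zero lam A hne hmark, zero_div]

/-- The point `((x))_x` given by a marked graph lies on the invariant manifold. Taking `x = 0`,
this includes that `(0, …, 0)` is non-zero. -/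
def OnInvariantManifold [Field K] (lam : K) (A : MarkedGraph k) : Prop :=
  ∀ x, A.coord lam x = ∏ j ∈ Finset.univ.filter (fun j => x j = true), A.coord lam (unitT j)

namespace OnInvariantManifold

variable [Field K] {lam : K} {A : MarkedGraph k}

lemma Z_zeroT_ne_zero (h : A.OnInvariantManifold lam) : A.Z K lam (zeroT k) ≠ 0 := by
  intro hzero
  have coord_zeroT := h (zeroT k)
  simp [coord, hzero, zeroT] at coord_zeroT

lemma Z_eq (h : A.OnInvariantManifold lam) (x : Fin k → Bool) :
    A.Z K lam x = A.Z K lam (zeroT k) *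
      ∏ j ∈ Finset.univ.filter (fun j => x j = true), A.coord lam (unitT j) := by
  rw [← h x, coord, mul_div_cancel₀ _ h.Z_zeroT_ne_zero]

lemma interiorZ_eq_zero (h : A.OnInvariantManifold lam) (hlam : lam ≠ 0) {x : Fin k → Bool}
    (hx : ¬A.Separates x) : A.interiorZ K lam x = 0 := by
  have Z_eq_zero : A.Z K lam x = 0 := by
    rw [h.Z_eq, prod_coord_unitT_eq_zero hx, mul_zero]
  rw [Z_eq_pow_card_image_mark_mul_interiorZ] at Z_eq_zero
  exact (mul_eq_zero.1 Z_eq_zero).resolve_left (pow_ne_zero _ hlam)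

lemma interiorZ_eq (h : A.OnInvariantManifold lam) (hlam : lam ≠ 0) (x : Fin k → Bool) :
    A.interiorZ K lam x = A.Z K lam (zeroT k) *
      ∏ j ∈ Finset.univ.filter (fun j => x j = true), A.coord lam (unitT j) / lam := by
  rw [Finset.prod_div_distrib, Finset.prod_const]
  by_cases hx : A.Separates x
  · rw [← mul_div_assoc, ← h.Z_eq, eq_div_iff (pow_ne_zero _ hlam), hx.Z_eq, mul_comm, wt]
  · rw [h.interiorZ_eq_zero hlam hx, prod_coord_unitT_eq_zero hx, zero_div, mul_zero]

end OnInvariantManifold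

end MarkedGraph

namespace GluingData

variable {m k : ℕ} {R K : Type}

section Incidence

variable (D : GluingData m k)

/-- The edge of the gluing scheme labeled `l` that contains the copy `i`. -/
def edgeOf (l : Fin k) (i : Fin m) : D.EIdx := (D.mem_unique l i).choose

lemma label_edgeOf (l : Fin k) (i : Fin m) : D.label (D.edgeOf l i) = l :=
  (D.mem_unique l i).choose_spec.1.1

lemma mem_edgeOf (l : Fin k) (i : Fin m) : i ∈ D.edge (D.edgeOf l i) :=
  (D.mem_unique l i).choose_spec.1.2

lemma edgeOf_label {e : D.EIdx} {i : Fin m} (h : i ∈ D.edge e) : D.edgeOf (D.label e) i = e :=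
  ((D.mem_unique (D.label e) i).choose_spec.2 e ⟨rfl, h⟩).symm

/-- Pairs (copy, label) correspond to incidences of the gluing scheme. -/
def incidenceEquiv : Fin m × Fin k ≃ Σ e : D.EIdx, {i // i ∈ D.edge e} where
  toFun p := ⟨D.edgeOf p.2 p.1, p.1, D.mem_edgeOf p.2 p.1⟩
  invFun q := (q.2.1, D.label q.1)
  left_inv p := by simp only [label_edgeOf]
  right_inv := by
    rintro ⟨e, i, hi⟩
    simp only [Sigma.mk.injEq, D.edgeOf_label hi, true_and]
    congr!
    exact D.edgeOf_label hi

/-- The vertex of a connecting graph to which the marked vertex labeled `l` of the copy `i` is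
glued. -/
def attachPoint (l : Fin k) (i : Fin m) : Σ e : D.EIdx, (D.Sig e).V :=
  ⟨D.edgeOf l i, D.att (D.edgeOf l i) i⟩

lemma attachPoint_label {e : D.EIdx} {i : Fin m} (h : i ∈ D.edge e) :
    D.attachPoint (D.label e) i = ⟨e, D.att e i⟩ := by
  rw [attachPoint, D.edgeOf_label h]

/-- The values seen by the marked vertices of the copy `i` under the assignment `t` to the
connecting graphs. -/
def boundary (t : ∀ e, (D.Sig e).V → Bool) (i : Fin m) : Fin k → Bool :=
  fun l => t (D.attachPoint l i).1 (D.attachPoint l i).2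

lemma boundary_label (t : ∀ e, (D.Sig e).V → Bool) {e : D.EIdx} {i : Fin m} (h : i ∈ D.edge e) :
    D.boundary t i (D.label e) = t e (D.att e i) := by
  rw [boundary, D.attachPoint_label h]

/-- The assignment `Y_e` to the vertices of the edge `e` induced by an assignment to `Σ_e`. -/
def trace (e : D.EIdx) (τ : (D.Sig e).V → Bool) : {i // i ∈ D.edge e} → Bool :=
  fun i => τ (D.att e i.1)

lemma prod_boundary {M : Type*} [CommMonoid M] (q : Fin k → M) (t : ∀ e, (D.Sig e).V → Bool) :
    ∏ i, ∏ l ∈ Finset.univ.filter (fun l => D.boundary t i l = true), q l =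
      ∏ e, q (D.label e) ^ D.normYe e (D.trace e (t e)) := by
  calc ∏ i, ∏ l ∈ Finset.univ.filter (fun l => D.boundary t i l = true), q l
      = ∏ p : Fin m × Fin k, if D.boundary t p.1 p.2 = true then q p.2 else 1 := by
        simp only [Finset.prod_filter, Fintype.prod_prod_type]
    _ = ∏ r : Σ e : D.EIdx, {i // i ∈ D.edge e},
          if D.trace r.1 (t r.1) r.2 = true then q (D.label r.1) else 1 := by
        rw [← D.incidenceEquiv.symm.prod_comp]
        refine Fintype.prod_congr _ _ fun r => if_congr ?_ rfl rfl
        exact (congrArg (· = true) (D.boundary_label t r.2.2)).to_iff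
    _ = ∏ e, q (D.label e) ^ D.normYe e (D.trace e (t e)) := by
        rw [Fintype.prod_sigma]
        simp only [← Finset.prod_filter, Finset.prod_const, normYe]

end Incidence

section Gluing

variable (D : GluingData m k) (A : MarkedGraph k)

/-- The image in `R(A)` of the vertex `v` of the copy `i` of `A`. -/
def copyVertex (i : Fin m) (v : A.G.V) : D.RV A := Quot.mk _ (Sum.inl (i, v))

/-- The image in `R(A)` of the vertex `v` of the connecting graph `Σ_e`. -/
def sigVertex (e : D.EIdx) (v : (D.Sig e).V) : D.RV A := Quot.mk _ (Sum.inr ⟨e, v⟩)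

lemma copyVertex_mark (i : Fin m) (l : Fin k) :
    D.copyVertex A i (A.mark l) =
      D.sigVertex A (D.attachPoint l i).1 (D.attachPoint l i).2 :=
  Quot.sound ⟨D.edgeOf l i, i, D.mem_edgeOf l i, by rw [label_edgeOf], rfl⟩

lemma RV_cases {p : D.RV A → Prop} (copy : ∀ i v, p (D.copyVertex A i v))
    (sig : ∀ e v, p (D.sigVertex A e v)) (q : D.RV A) : p q := by
  rcases q with ⟨⟨i, v⟩ | ⟨e, v⟩⟩
  exacts [copy i v, sig e v]

/-- Assignments on `R(A)` are pairs of assignments on the connecting graphs and on the copies that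
agree at the glued vertices. -/
def assignmentEquiv : (D.RV A → Bool) ≃
    {p : (∀ e, (D.Sig e).V → Bool) × (Fin m → A.G.V → Bool) //
      ∀ i l, p.2 i (A.mark l) = D.boundary p.1 i l} where
  toFun σ := ⟨(fun e v => σ (D.sigVertex A e v), fun i v => σ (D.copyVertex A i v)),
    fun i l => congrArg σ (D.copyVertex_mark A i l)⟩
  invFun p := Quot.lift (Sum.elim (fun c => p.1.2 c.1 c.2) fun c => p.1.1 c.1 c.2) (by
    rintro _ _ ⟨e, i, hi, rfl, rfl⟩
    exact (p.2 i (D.label e)).trans (D.boundary_label p.1.1 hi))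
  left_inv σ := funext (D.RV_cases A (fun _ _ => rfl) fun _ _ => rfl)
  right_inv _ := rfl

lemma mem_RGraph_E {z : Sym2 (D.RV A)} :
    z ∈ (D.RGraph A).G.E ↔ (∃ i, ∃ y ∈ A.G.E, y.map (D.copyVertex A i) = z) ∨
      ∃ e, ∃ y ∈ (D.Sig e).E, y.map (D.sigVertex A e) = z := by
  change z ∈ (∑ i, A.G.E.map (Sym2.map (D.copyVertex A i))) +
    ∑ e, (D.Sig e).E.map (Sym2.map (D.sigVertex A e)) ↔ _
  simp only [Multiset.mem_add, Multiset.mem_sum, Multiset.mem_map, Finset.mem_univ, true_and]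

lemma indep_RGraph_iff (σ : D.RV A → Bool) :
    (D.RGraph A).G.Indep σ ↔ (∀ e, (D.Sig e).Indep fun v => σ (D.sigVertex A e v)) ∧
      ∀ i, A.G.Indep fun v => σ (D.copyVertex A i v) := by
  constructor
  · exact fun h => ⟨fun e v w hvw => h _ _ ((D.mem_RGraph_E A).2 (.inr ⟨e, _, hvw, rfl⟩)),
      fun i v w hvw => h _ _ ((D.mem_RGraph_E A).2 (.inl ⟨i, _, hvw, rfl⟩))⟩
  · rintro ⟨hsig, hcopy⟩ v w hvw
    rcases (D.mem_RGraph_E A).1 hvw with ⟨i, ⟨a, b⟩, hab, heq⟩ | ⟨e, ⟨a, b⟩, hab, heq⟩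
    · rcases Sym2.eq_iff.1 heq with ⟨rfl, rfl⟩ | ⟨rfl, rfl⟩
      exacts [hcopy i a b hab, fun h => hcopy i a b hab h.symm]
    · rcases Sym2.eq_iff.1 heq with ⟨rfl, rfl⟩ | ⟨rfl, rfl⟩
      exacts [hsig e a b hab, fun h => hsig e a b hab h.symm]

/-- The unmarked vertex of a copy of `A` represented by a vertex of `R(A)`, if there is one. -/
def interiorPart : D.RV A → Option (Fin m × A.G.V) :=
  Quot.lift (Sum.elim (fun c => if ∃ j, A.mark j = c.2 then none else some c) fun _ => none) (by
    rintro _ _ ⟨e, i, -, rfl, rfl⟩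
    exact if_pos ⟨D.label e, rfl⟩)

lemma interiorPart_copyVertex {i : Fin m} {v : A.G.V} (hv : ∀ j, A.mark j ≠ v) :
    D.interiorPart A (D.copyVertex A i v) = some (i, v) :=
  if_neg (not_exists.2 hv)

lemma sum_interiorOnes (σ : D.RV A → Bool) :
    ∑ i, A.interiorOnes (fun v => σ (D.copyVertex A i v)) =
      (Finset.univ.filter fun q => σ q = true ∧ ¬∃ e v, D.sigVertex A e v = q).card := by
  unfold MarkedGraph.interiorOnes
  rw [← Finset.card_sigma]
  refine Finset.card_bij (fun c _ => D.copyVertex A c.1 c.2) ?_ ?_ ?_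
  · rintro ⟨i, v⟩ h
    obtain ⟨hv, hσ⟩ : (∀ j, A.mark j ≠ v) ∧ σ (D.copyVertex A i v) = true := by simpa using h
    refine Finset.mem_filter.2 ⟨Finset.mem_univ _, hσ, fun ⟨e, w, hw⟩ => ?_⟩
    have interiorPart_eq := (congrArg (D.interiorPart A) hw).trans (D.interiorPart_copyVertex A hv)
    exact Option.some_ne_none _ interiorPart_eq.symm
  · rintro ⟨i, v⟩ h ⟨i', v'⟩ h' heq
    have hv : ∀ j, A.mark j ≠ v := by simp_all
    have hv' : ∀ j, A.mark j ≠ v' := by simp_all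
    have interiorPart_eq := congrArg (D.interiorPart A) heq
    rw [D.interiorPart_copyVertex A hv, D.interiorPart_copyVertex A hv'] at interiorPart_eq
    cases interiorPart_eq
    rfl
  · refine D.RV_cases A (fun i v h => ⟨⟨i, v⟩, ?_, rfl⟩) fun e v h => ?_
    · obtain ⟨hσ, hv⟩ := (Finset.mem_filter.1 h).2
      have unmarked : ∀ j, A.mark j ≠ v := by
        rintro j rfl
        exact hv ⟨_, _, (D.copyVertex_mark A i j).symm⟩
      simpa using ⟨unmarked, hσ⟩
    · exact absurd ⟨e, v, rfl⟩ (Finset.mem_filter.1 h).2.2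

/-- The number of vertices of `R(A)` on connecting graphs that are assigned `1` by `t`. It is the
total number of ones of `t` unless shared marked vertices of `A` identify some of them. -/
def gluedOnes (t : ∀ e, (D.Sig e).V → Bool) : ℕ :=
  ((Finset.univ.filter fun p : Σ e : D.EIdx, (D.Sig e).V => t p.1 p.2 = true).image
    fun p => D.sigVertex A p.1 p.2).card

lemma ones_RGraph (σ : D.RV A → Bool) :
    (D.RGraph A).G.ones σ = D.gluedOnes A (fun e v => σ (D.sigVertex A e v)) +
      ∑ i, A.interiorOnes fun v => σ (D.copyVertex A i v) := by
  rw [sum_interiorOnes]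
  change (Finset.univ.filter fun q : D.RV A => σ q = true).card = _
  rw [← Finset.card_filter_add_card_filter_not fun q => ∃ e v, D.sigVertex A e v = q,
    Finset.filter_filter, Finset.filter_filter, gluedOnes]
  congr 2
  ext q
  simp only [Finset.mem_filter, Finset.mem_univ, true_and, Finset.mem_image, Sigma.exists]
  constructor
  · rintro ⟨hσ, e, v, rfl⟩
    exact ⟨e, v, hσ, rfl⟩
  · rintro ⟨e, v, hσ, rfl⟩
    exact ⟨hσ, e, v, rfl⟩

variable {A} in
lemma injOn_sigVertex {t : ∀ e, (D.Sig e).V → Bool} (h : ∀ i, A.Separates (D.boundary t i)) :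
    Set.InjOn (fun p : Σ e : D.EIdx, (D.Sig e).V => D.sigVertex A p.1 p.2)
      {p | t p.1 p.2 = true} := by
  rintro p - p₀ (hp₀ : t p₀.1 p₀.2 = true) hpp₀
  -- The vertices glued to `p₀`; the gluing respects them because `t` is `1` at `p₀`.
  let representsP₀ : D.RV A → Prop := Quot.lift
    (Sum.elim (fun c => ∃ l, A.mark l = c.2 ∧ D.attachPoint l c.1 = p₀) fun p => p = p₀) (by
      rintro _ _ ⟨e, i, hi, rfl, rfl⟩
      simp only [Sum.elim_inl, Sum.elim_inr, eq_iff_iff, ← D.attachPoint_label hi]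
      refine ⟨fun ⟨l, hmark, hl⟩ => ?_, fun he => ⟨_, rfl, he⟩⟩
      have boundary_eq_true : D.boundary t i l = true := by rw [boundary, hl, hp₀]
      rwa [← h i l _ boundary_eq_true hmark])
  exact (congrArg representsP₀ hpp₀).mpr rfl

variable {A} in
lemma gluedOnes_eq_sum_ones {t : ∀ e, (D.Sig e).V → Bool}
    (h : ∀ i, A.Separates (D.boundary t i)) :
    D.gluedOnes A t = ∑ e, (D.Sig e).ones (t e) := by
  rw [gluedOnes, Finset.card_image_of_injOn (by simpa using D.injOn_sigVertex h)]
  simp only [MGraph.ones, Finset.card_filter, Fintype.sum_sigma]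

end Gluing

section Recursion

variable (D : GluingData m k) (A : MarkedGraph k)

/-- The assignments `τ` on `Σ_e` that count in `Z_{Σ_e}(λ, Y_e, x|_e)` for some `Y_e`. -/
def Admissible (x : Fin k → Bool) (e : D.EIdx) (τ : (D.Sig e).V → Bool) : Prop :=
  (D.Sig e).Indep τ ∧ ∀ j, D.Phi j = e → τ (D.root e) = x j

lemma admissible_RGraph_iff (x : Fin k → Bool) (σ : D.RV A → Bool) :
    ((D.RGraph A).G.Indep σ ∧ ∀ j, σ ((D.RGraph A).mark j) = x j) ↔
      (∀ e, D.Admissible x e fun v => σ (D.sigVertex A e v)) ∧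
        ∀ i, A.G.Indep fun v => σ (D.copyVertex A i v) := by
  have root_iff : (∀ j, σ ((D.RGraph A).mark j) = x j) ↔
      ∀ e j, D.Phi j = e → σ (D.sigVertex A e (D.root e)) = x j :=
    ⟨fun h _ j he => he ▸ h j, fun h j => h _ j rfl⟩
  simp only [indep_RGraph_iff, root_iff, Admissible, forall_and]
  tauto

lemma prod_interiorZ [CommRing R] (lam : R) (y : Fin m → Fin k → Bool) :
    ∏ i, A.interiorZ R lam (y i) = ∑ s : Fin m → A.G.V → Bool,
      if ∀ i l, s i (A.mark l) = y i l then
        if ∀ i, A.G.Indep (s i) then lam ^ ∑ i, A.interiorOnes (s i) else 0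
      else 0 := by
  unfold MarkedGraph.interiorZ
  rw [Finset.prod_univ_sum, Fintype.piFinset_univ]
  simp only [Finset.prod_ite_zero, Finset.mem_univ, forall_true_left, forall_and,
    Finset.prod_pow_eq_pow_sum, ← ite_and, and_comm]

theorem Z_RGraph [CommRing R] (lam : R) (x : Fin k → Bool) :
    (D.RGraph A).Z R lam x = ∑ t : ∀ e, (D.Sig e).V → Bool,
      (if ∀ e, D.Admissible x e (t e) then lam ^ D.gluedOnes A t else 0) *
        ∏ i, A.interiorZ R lam (D.boundary t i) := by
  let weight (t : ∀ e, (D.Sig e).V → Bool) (s : Fin m → A.G.V → Bool) : R :=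
    (if ∀ e, D.Admissible x e (t e) then lam ^ D.gluedOnes A t else 0) *
      if ∀ i, A.G.Indep (s i) then lam ^ ∑ i, A.interiorOnes (s i) else 0
  calc (D.RGraph A).Z R lam x
      = ∑ σ : D.RV A → Bool, weight (D.assignmentEquiv A σ).1.1 (D.assignmentEquiv A σ).1.2 := by
        refine Finset.sum_congr rfl fun (σ : D.RV A → Bool) _ => ?_
        simp only [weight]
        rw [ite_zero_mul_ite_zero, ← pow_add]
        exact if_congr (D.admissible_RGraph_iff A x σ) (by rw [ones_RGraph]; rfl) rfl
    _ = ∑ p : {p : (∀ e, (D.Sig e).V → Bool) × (Fin m → A.G.V → Bool) //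
          ∀ i l, p.2 i (A.mark l) = D.boundary p.1 i l}, weight p.1.1 p.1.2 :=
        (D.assignmentEquiv A).sum_comp fun p => weight p.1.1 p.1.2
    _ = ∑ t, ∑ s, if ∀ i l, s i (A.mark l) = D.boundary t i l then weight t s else 0 := by
        rw [← Fintype.sum_prod_type', ← Finset.sum_filter]
        exact (Finset.sum_subtype _ Finset.mem_filter_univ (Function.uncurry weight)).symm
    _ = _ := by
        simp only [prod_interiorZ A lam, Finset.mul_sum, weight, mul_ite, mul_zero]

end Recursion

section InvariantManifold

variable [Field K] {lam : K} (D : GluingData m k)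

/-- The sum over the assignments `Y_e` to the vertices of the edge `e` in the formula for
`[e_j]_{n+1}`, with `q` in place of `[e_ℓ]_n`. -/
def edgeSum (lam q : K) (x : Fin k → Bool) (e : D.EIdx) : K :=
  ∑ Ye : {i // i ∈ D.edge e} → Bool,
    q ^ D.normYe e Ye * (D.ZEdge K lam e Ye x / lam ^ D.normYe e Ye)

lemma ZEdge_eq_sum_trace (e : D.EIdx) (Ye : {i // i ∈ D.edge e} → Bool) (x : Fin k → Bool) :
    D.ZEdge K lam e Ye x = ∑ τ, if D.trace e τ = Ye then
      if D.Admissible x e τ then lam ^ (D.Sig e).ones τ else 0 else 0 := by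
  refine Finset.sum_congr rfl fun τ _ => ?_
  rw [← ite_and]
  refine if_congr ?_ rfl rfl
  rw [funext_iff, Admissible, and_left_comm]
  rfl

lemma edgeSum_eq_sum_assignment (q : K) (x : Fin k → Bool) (e : D.EIdx) :
    D.edgeSum lam q x e = ∑ τ, (if D.Admissible x e τ then lam ^ (D.Sig e).ones τ else 0) *
      (q / lam) ^ D.normYe e (D.trace e τ) := by
  simp only [edgeSum, ZEdge_eq_sum_trace, Finset.sum_div, Finset.mul_sum]
  rw [Finset.sum_comm]
  refine Finset.sum_congr rfl fun τ _ => ?_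
  rw [Fintype.sum_eq_single (D.trace e τ) fun Ye hYe => by
    rw [if_neg hYe.symm, zero_div, mul_zero], if_pos rfl, div_pow]
  ring

lemma edgeSum_unitT_of_ne (q : K) {j : Fin k} {e : D.EIdx} (he : e ≠ D.Phi j) :
    D.edgeSum lam q (unitT j) e = D.edgeSum lam q (zeroT k) e := by
  have root_condition_eq : ∀ j', D.Phi j' = e → unitT j j' = zeroT k j' := by
    rintro j' rfl
    simp [unitT, zeroT, ne_of_apply_ne D.Phi he]
  have admissible_iff (τ) : D.Admissible (unitT j) e τ ↔ D.Admissible (zeroT k) e τ :=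
    and_congr_right' (forall₂_congr fun j' h => by rw [root_condition_eq j' h])
  simp only [edgeSum_eq_sum_assignment, admissible_iff]

lemma prod_interiorZ_boundary {A : MarkedGraph k} (hlam : lam ≠ 0)
    (h : A.OnInvariantManifold lam) (t : ∀ e, (D.Sig e).V → Bool) :
    ∏ i, A.interiorZ K lam (D.boundary t i) = A.Z K lam (zeroT k) ^ m *
      ∏ e, (A.coord lam (unitT (D.label e)) / lam) ^ D.normYe e (D.trace e (t e)) := by
  simp only [h.interiorZ_eq hlam]
  rw [Finset.prod_mul_distrib, Finset.prod_const, Finset.card_univ, Fintype.card_fin,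
    D.prod_boundary (fun l => A.coord lam (unitT l) / lam)]

lemma pow_gluedOnes_mul_prod_interiorZ {A : MarkedGraph k} (hlam : lam ≠ 0)
    (h : A.OnInvariantManifold lam) (t : ∀ e, (D.Sig e).V → Bool) :
    lam ^ D.gluedOnes A t * ∏ i, A.interiorZ K lam (D.boundary t i) =
      lam ^ (∑ e, (D.Sig e).ones (t e)) * ∏ i, A.interiorZ K lam (D.boundary t i) := by
  by_cases hsep : ∀ i, A.Separates (D.boundary t i)
  · rw [D.gluedOnes_eq_sum_ones hsep]
  · obtain ⟨i, hi⟩ := not_forall.1 hsep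
    rw [Finset.prod_eq_zero (Finset.mem_univ i) (h.interiorZ_eq_zero hlam hi), mul_zero, mul_zero]

lemma Z_RGraph_eq_pow_mul_prod_edgeSum {A : MarkedGraph k} (hlam : lam ≠ 0)
    (h : A.OnInvariantManifold lam) (x : Fin k → Bool) :
    (D.RGraph A).Z K lam x = A.Z K lam (zeroT k) ^ m *
      ∏ e, D.edgeSum lam (A.coord lam (unitT (D.label e))) x e := by
  simp only [Z_RGraph, edgeSum_eq_sum_assignment]
  rw [Finset.prod_univ_sum, Fintype.piFinset_univ, Finset.mul_sum]
  refine Finset.sum_congr rfl fun t _ => ?_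
  rw [ite_mul, pow_gluedOnes_mul_prod_interiorZ D hlam h, ← ite_mul,
    prod_interiorZ_boundary D hlam h, Finset.prod_mul_distrib, Finset.prod_ite_zero,
    Finset.prod_pow_eq_pow_sum]
  simp only [Finset.mem_univ, forall_true_left]
  ring

end InvariantManifold

end GluingData

theorem stmt16_general {m k : ℕ} {K : Type} [Field K] {lam : K} (D : GluingData m k)
    (A : MarkedGraph k) (hlam : lam ≠ 0) (hRA : (D.RGraph A).Z K lam (zeroT k) ≠ 0)
    (hinv : A.OnInvariantManifold lam) (j : Fin k) :
    (D.RGraph A).coord lam (unitT j) =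
      D.edgeSum lam (A.coord lam (unitT (D.Lam j))) (unitT j) (D.Phi j) /
        D.edgeSum lam (A.coord lam (unitT (D.Lam j))) (zeroT k) (D.Phi j) := by
  have factor := D.Z_RGraph_eq_pow_mul_prod_edgeSum hlam hinv
  have other_factors_eq : ∏ e ∈ Finset.univ.erase (D.Phi j),
        D.edgeSum lam (A.coord lam (unitT (D.label e))) (unitT j) e =
      ∏ e ∈ Finset.univ.erase (D.Phi j),
        D.edgeSum lam (A.coord lam (unitT (D.label e))) (zeroT k) e :=
    Finset.prod_congr rfl fun e he => D.edgeSum_unitT_of_ne _ (Finset.ne_of_mem_erase he)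
  simp only [← Finset.mul_prod_erase _ _ (Finset.mem_univ (D.Phi j))] at factor
  rw [factor] at hRA
  rw [MarkedGraph.coord, factor, factor, other_factors_eq,
    mul_div_mul_left _ _ (left_ne_zero_of_mul hRA),
    mul_div_mul_right _ _ (right_ne_zero_of_mul (right_ne_zero_of_mul hRA))]
  rfl

-- STATEMENT 16
theorem stmt16 {m k : ℕ} (hm : 2 ≤ m) (hk : 2 ≤ k) (D : GluingData m k)
    (Gs : ℕ → MarkedGraph k) (hrec : ∀ n, Gs (n + 1) = D.RGraph (Gs n)) (n : ℕ)
    (hinv : ∀ x : Fin k → Bool,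
      (Gs n).Z (RatFunc ℂ) RatFunc.X x / (Gs n).Z (RatFunc ℂ) RatFunc.X (zeroT k) =
        ∏ j ∈ Finset.univ.filter (fun j => x j = true),
          (Gs n).Z (RatFunc ℂ) RatFunc.X (unitT j) /
            (Gs n).Z (RatFunc ℂ) RatFunc.X (zeroT k))
    (j : Fin k) :
    (Gs (n + 1)).Z (RatFunc ℂ) RatFunc.X (unitT j) /
        (Gs (n + 1)).Z (RatFunc ℂ) RatFunc.X (zeroT k) =
      (∑ Ye : {i // i ∈ D.edge (D.Phi j)} → Bool,
          ((Gs n).Z (RatFunc ℂ) RatFunc.X (unitT (D.Lam j)) /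
              (Gs n).Z (RatFunc ℂ) RatFunc.X (zeroT k)) ^ D.normYe (D.Phi j) Ye *
            (D.ZEdge (RatFunc ℂ) RatFunc.X (D.Phi j) Ye (unitT j) /
              RatFunc.X ^ D.normYe (D.Phi j) Ye)) /
      (∑ Ye : {i // i ∈ D.edge (D.Phi j)} → Bool,
          ((Gs n).Z (RatFunc ℂ) RatFunc.X (unitT (D.Lam j)) /
              (Gs n).Z (RatFunc ℂ) RatFunc.X (zeroT k)) ^ D.normYe (D.Phi j) Ye *
            (D.ZEdge (RatFunc ℂ) RatFunc.X (D.Phi j) Ye (zeroT k) /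
              RatFunc.X ^ D.normYe (D.Phi j) Ye)) := by
  rw [hrec]
  have hRA := (D.RGraph (Gs n)).Z_ratFunc_X_zeroT_ne_zero (R := ℂ)
  exact stmt16_general (K := RatFunc ℂ) D (Gs n) RatFunc.X_ne_zero hRA hinv j

end
end
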